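/- Let $M$ be a vector space over a field of characteristic zero equipped with a bilinear bracket $[\cdot,\cdot]$ satisfying $[x,x]=0$ for all $x$ and the Mal'tsev identity $[[x,y],[x,z]] = [[[x,y],z],x] + [[[y,z],x],x] + [[[z,x],x],y]$ for all $x,y,z$. Then $M$ with the Loos bracket $\{x,y,z\} := [x,[y,z]] - [y,[x,z]] + 2[[x,y],z]$ is a Lie triple system; that is, for all $x,y,z,w,v \in M$: (a) $\{x,y,z\} = -\{y,x,z\}$; (b) $\{x,y,z\} + \{y,z,x\} + \{z,x,y\} = 0$; (c) $\{x,y,\{z,w,v\}\} = \{\{x,y,z\},w,v\} + \{z,\{x,y,w\},v\} + \{z,w,\{x,y,v\}\}$. -/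

import Mathlib

/-!
For an alternating bilinear bracket, the Mal'tsev identity says exactly that every left
multiplication `[a, ·]` is a derivation of the operation `[[x, y], x]`, hence of its polarization
`S(x, y, z) = [[x, y], z] + [[z, y], x]`. The Loos bracket is `S(x, y, z) - S(y, x, z)`, so left
multiplications are derivations of it too. Since `{x, y, ·}` is the operator
`[L x, L y] + 2 L [x, y]`, where `L a = [a, ·]`, and derivations form a Lie algebra, it is again a
derivation. The cyclic identity reduces to the symmetry `S(x, y, z) = S(z, y, x)`.
-/

section LoosBracket

attribute [local instance] LieRing.ofAssociativeRing

variable {R M : Type*} [CommRing R] [AddCommGroup M] [Module R M]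

/-- A bilinear bracket that makes a module over a commutative ring a Mal'tsev algebra. -/
structure IsMaltsev (B : M →ₗ[R] M →ₗ[R] M) : Prop where
  isAlt : B.IsAlt
  maltsev : ∀ x y z : M,
    B (B x y) (B x z) = B (B (B x y) z) x + B (B (B y z) x) x + B (B (B z x) x) y

/-- The axioms of a Lie triple system for the trilinear bracket `{x, y, z} = T x y z`. Currying
makes `T x y` the endomorphism `{x, y, ·}`, which `deriv` requires to be a derivation. -/
structure IsLieTripleSystem (T : M →ₗ[R] M →ₗ[R] Module.End R M) : Prop where
  skew : ∀ x y z : M, T x y z = -T y x z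
  cyclic : ∀ x y z : M, T x y z + T y z x + T z x y = 0
  deriv : ∀ x y z w v : M,
    T x y (T z w v) = T (T x y z) w v + T z (T x y w) v + T z w (T x y v)

/-- The Lie algebra of derivations of a trilinear operation. -/
def tripleDerivations (T : M →ₗ[R] M →ₗ[R] Module.End R M) :
    LieSubalgebra R (Module.End R M) where
  carrier := {D | ∀ x y z : M, D (T x y z) = T (D x) y z + T x (D y) z + T x y (D z)}
  zero_mem' := by simp
  add_mem' {D E} hD hE x y z := by
    simp only [LinearMap.add_apply, map_add, hD x y z, hE x y z]
    abel
  smul_mem' c D hD x y z := by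
    simp only [LinearMap.smul_apply, map_smul, hD x y z, smul_add]
  lie_mem' {D E} hD hE x y z := by
    simp only [Set.mem_ofPred_eq] at hD hE
    simp only [Ring.lie_def, LinearMap.sub_apply, Module.End.mul_apply, map_sub, map_add, hD, hE]
    abel

theorem mem_tripleDerivations {T : M →ₗ[R] M →ₗ[R] Module.End R M} {D : Module.End R M} :
    D ∈ tripleDerivations T ↔
      ∀ x y z : M, D (T x y z) = T (D x) y z + T x (D y) z + T x y (D z) :=
  Iff.rfl

/-- The Loos bracket of `B = [·, ·]`, encoded as the bilinear map sending `x` and `y` to the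
endomorphism `{x, y, ·}`. -/
def loosBracket (B : M →ₗ[R] M →ₗ[R] M) : M →ₗ[R] M →ₗ[R] Module.End R M :=
  (LieAlgebra.ad R (Module.End R M)).toLinearMap.compl₁₂ B B + 2 • B.compr₂ B

theorem loosBracket_eq_lie_add (B : M →ₗ[R] M →ₗ[R] M) (x y : M) :
    loosBracket B x y = ⁅B x, B y⁆ + 2 • B (B x y) :=
  rfl

theorem loosBracket_apply (B : M →ₗ[R] M →ₗ[R] M) (x y z : M) :
    loosBracket B x y z = B x (B y z) - B y (B x z) + 2 • B (B x y) z :=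
  rfl

/-- The polarization in `x` of the operation `[[x, y], x]`, through which both the Mal'tsev identity
and the Loos bracket can be expressed. -/
def symmTriple (B : M →ₗ[R] M →ₗ[R] M) (x y z : M) : M :=
  B (B x y) z + B (B z y) x

theorem symmTriple_swap_outer (B : M →ₗ[R] M →ₗ[R] M) (x y z : M) :
    symmTriple B x y z = symmTriple B z y x :=
  add_comm _ _

theorem loosBracket_eq_symmTriple_sub {B : M →ₗ[R] M →ₗ[R] M} (hB : B.IsAlt) (x y z : M) :
    loosBracket B x y z = symmTriple B x y z - symmTriple B y x z := by
  have hx : B x (B y z) = B (B z y) x := by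
    rw [← hB.neg (B y z), ← LinearMap.neg_apply, ← map_neg, hB.neg]
  have hy : B y (B x z) = B (B z x) y := by
    rw [← hB.neg (B x z), ← LinearMap.neg_apply, ← map_neg, hB.neg]
  have hxy : B (B y x) z = -B (B x y) z := by
    rw [← hB.neg x y, map_neg, LinearMap.neg_apply]
  rw [loosBracket_apply, symmTriple, symmTriple, hx, hy, hxy]
  abel

namespace IsMaltsev

variable {B : M →ₗ[R] M →ₗ[R] M}

theorem left_mul_bracket_bracket_self (hB : IsMaltsev B) (a x y : M) :
    B a (B (B x y) x) =
      B (B (B a x) y) x + B (B x (B a y)) x + B (B x y) (B a x) := by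
  have h := hB.maltsev x a y
  have hax : B x a = -B a x := (hB.isAlt.neg a x).symm
  have hay : B (B a y) x = -B x (B a y) := (hB.isAlt.neg x (B a y)).symm
  have hyx : B y x = -B x y := (hB.isAlt.neg x y).symm
  have ha : B (B (B x y) x) a = -B a (B (B x y) x) := (hB.isAlt.neg a _).symm
  have hxx : B (B a x) (B x y) = -B (B x y) (B a x) := (hB.isAlt.neg (B x y) (B a x)).symm
  simp only [hax, hay, hyx, ha, hxx, map_neg, LinearMap.neg_apply, neg_neg] at h
  rw [h]
  abel

theorem left_mul_symmTriple (hB : IsMaltsev B) (a x y z : M) :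
    B a (symmTriple B x y z) =
      symmTriple B (B a x) y z + symmTriple B x (B a y) z + symmTriple B x y (B a z) := by
  have h := hB.left_mul_bracket_bracket_self a (x + z) y
  simp only [map_add, LinearMap.add_apply] at h
  simp only [symmTriple, map_add]
  linear_combination (norm := abel)
    h - hB.left_mul_bracket_bracket_self a x y - hB.left_mul_bracket_bracket_self a z y

theorem left_mul_mem_tripleDerivations (hB : IsMaltsev B) (a : M) :
    B a ∈ tripleDerivations (loosBracket B) := by
  rw [mem_tripleDerivations]
  intro x y z
  simp only [loosBracket_eq_symmTriple_sub hB.isAlt, map_sub, hB.left_mul_symmTriple]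
  abel

theorem loosBracket_mem_tripleDerivations (hB : IsMaltsev B) (x y : M) :
    loosBracket B x y ∈ tripleDerivations (loosBracket B) := by
  have left_mul_mem := hB.left_mul_mem_tripleDerivations
  rw [loosBracket_eq_lie_add]
  exact add_mem (LieSubalgebra.lie_mem _ (left_mul_mem x) (left_mul_mem y))
    (nsmul_mem (left_mul_mem (B x y)) 2)

end IsMaltsev

theorem maltsev_loos_lieTripleSystem_general {B : M →ₗ[R] M →ₗ[R] M} (hB : IsMaltsev B) :
    IsLieTripleSystem (loosBracket B) where
  skew x y z := by
    simp only [loosBracket_eq_symmTriple_sub hB.isAlt, neg_sub]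
  cyclic x y z := by
    simp only [loosBracket_eq_symmTriple_sub hB.isAlt]
    rw [symmTriple_swap_outer B z y x, symmTriple_swap_outer B z x y,
      symmTriple_swap_outer B y z x]
    abel
  deriv x y := mem_tripleDerivations.mp (hB.loosBracket_mem_tripleDerivations x y)

end LoosBracket

/-- A Mal'tsev algebra over a field of characteristic zero is a Lie
triple system under the Loos bracket `{x,y,z} = [x,[y,z]] - [y,[x,z]] + 2[[x,y],z]`:
skew-symmetry in the first two arguments, vanishing cyclic sum, and the
derivation identity all hold. -/
theorem maltsev_loos_lieTripleSystem
    (k : Type*) [Field k] [CharZero k] (M : Type*) [AddCommGroup M] [Module k M]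
    (B : M →ₗ[k] M →ₗ[k] M)
    (halt : ∀ x : M, B x x = 0)
    (hmal : ∀ x y z : M,
      B (B x y) (B x z) =
        B (B (B x y) z) x + B (B (B y z) x) x + B (B (B z x) x) y)
    (loos : M → M → M → M)
    (hloos : ∀ x y z : M, loos x y z = B x (B y z) - B y (B x z) + 2 • B (B x y) z) :
    (∀ x y z : M, loos x y z = - loos y x z) ∧
    (∀ x y z : M, loos x y z + loos y z x + loos z x y = 0) ∧
    (∀ x y z w v : M,
      loos x y (loos z w v) =
        loos (loos x y z) w v + loos z (loos x y w) v + loos z w (loos x y v)) := by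
  obtain rfl : loos = fun x y z => loosBracket B x y z := by
    ext x y z
    rw [hloos, loosBracket_apply]
  obtain ⟨skew, cyclic, deriv⟩ := maltsev_loos_lieTripleSystem_general ⟨halt, hmal⟩
  exact ⟨skew, cyclic, deriv⟩
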